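/- Let α > 0, d ≥ 1, ℓ = ⌊α⌋⁻, let A ⊂ ℝ^d be any finite set of distinct points with K_{A,A} invertible, and let K̃(x₁, x₂) = K(x₁, x₂) − K_{x₁,A} K_{A,A}⁻¹ K_{A,x₂}. There exist constants C > 0 and δ ∈ (0,1), depending only on α and d (in particular, independent of A), such that for every multi-index k with |k| = ℓ, every x ∈ ℝ^d and every h ∈ ℝ^d with 0 < ‖h‖₂ ≤ δ: |K̃^{(k,k)}(x, x) − K̃^{(k,k)}(x, x+h) − K̃^{(k,k)}(x+h, x) + K̃^{(k,k)}(x+h, x+h)| ≤ C ‖h‖₂^{2(α−ℓ)} if α ∉ ℕ, and ≤ C ‖h‖₂² ln(1/‖h‖₂) if α ∈ ℕ. -/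

import Mathlib

open Matrix MeasureTheory

noncomputable section

/-- The Matérn function with regularity `α` on ℝ^d (Fourier normalization):
`K_α(x) = ∫ cos⟨x,ξ⟩ (1+‖ξ‖₂²)^{-(α+d/2)} dξ`. -/
def matern (α : ℝ) (d : ℕ) (x : Fin d → ℝ) : ℝ :=
  ∫ ξ : Fin d → ℝ, Real.cos (∑ j, x j * ξ j) * (1 + ∑ j, ξ j ^ 2) ^ (-(α + (d : ℝ) / 2))

/-- `⌊α⌋⁻`, the largest integer strictly smaller than `α` (for `α > 0`). -/
def lbelow (α : ℝ) : ℕ := Nat.ceil α - 1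

/-- `α` is a (nonnegative) integer. -/
def IsNatVal (α : ℝ) : Prop := ∃ n : ℕ, α = n

/-- The Euclidean norm `‖x‖₂` on ℝ^d. -/
def nrm {d : ℕ} (x : Fin d → ℝ) : ℝ := Real.sqrt (∑ j, x j ^ 2)

/-- Partial derivative in the `j`-th coordinate. -/
def pder (d : ℕ) (j : Fin d) (f : (Fin d → ℝ) → ℝ) : (Fin d → ℝ) → ℝ :=
  fun x => fderiv ℝ f x (Pi.single j 1)

/-- The iterated partial derivative `∂^k` associated with a multi-index `k ∈ ℕ^d`. -/
def mder (d : ℕ) (k : Fin d → ℕ) (f : (Fin d → ℝ) → ℝ) : (Fin d → ℝ) → ℝ :=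
  (List.finRange d).foldr (fun j g => (pder d j)^[k j] g) f

/-- Mixed derivative `F^{(k₁,k₂)}(x₁,x₂) = ∂^{k₁}_{x₁} ∂^{k₂}_{x₂} F(x₁,x₂)`. -/
def mder2 (d : ℕ) (k₁ k₂ : Fin d → ℕ) (F : (Fin d → ℝ) → (Fin d → ℝ) → ℝ)
    (x₁ x₂ : Fin d → ℝ) : ℝ :=
  mder d k₁ (fun y => mder d k₂ (F y) x₂) x₁

/-- The Matérn kernel matrix `K_{A,A} = (K(w_i, w_j))_{i,j}`. -/
def maternMat (α : ℝ) (d : ℕ) {n : ℕ} (w : Fin n → Fin d → ℝ) :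
    Matrix (Fin n) (Fin n) ℝ :=
  Matrix.of fun i j => matern α d (w i - w j)

/-- The Matérn kernel column vector `K_{A,x} = (K(w_i, x))_i`. -/
def maternVec (α : ℝ) (d : ℕ) {n : ℕ} (w : Fin n → Fin d → ℝ) (x : Fin d → ℝ) :
    Fin n → ℝ :=
  fun i => matern α d (w i - x)

/-- The conditional kernel `K̃(x₁,x₂) = K(x₁,x₂) − K_{x₁,A} K_{A,A}⁻¹ K_{A,x₂}`. -/
def condK (α : ℝ) (d : ℕ) {n : ℕ} (w : Fin n → Fin d → ℝ) (x₁ x₂ : Fin d → ℝ) : ℝ :=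
  matern α d (x₁ - x₂) -
    maternVec α d w x₁ ⬝ᵥ ((maternMat α d w)⁻¹ *ᵥ maternVec α d w x₂)

/-!
Write `K(x, y) = ⟪Φ x, Φ y⟫`, where `Φ x` is the character `ξ ↦ exp (i⟨x, ξ⟩)` in `L²` of the
spectral measure. Then `K̃(x, y) = ⟪Q (Φ x), Φ y⟫`, where `Q` is the orthogonal projection off the
span of the features of `A`. Differentiating `Φ` multiplies it by the symbol `(iξ)^k`, so the second
difference of `K̃^{(k,k)}` is `⟪Q u, u⟫` with `u = ∂^k Φ x - ∂^k Φ (x + h)`. Since `‖Q‖ ≤ 1`, it is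
at most `‖u‖²`, and `A` has disappeared. In polar coordinates `‖u‖²` is bounded by
`∫₀^∞ min 4 (c (t y)²) (1 + y²)^{-(β + 1/2)} dy` with `t = ‖h‖₂` and `β = α - |k|`; splitting at
`y = 1` and `y = 1 / t` gives the rate, the logarithm being `∫ dy / y` over `[1, 1 / t]` when
`β = 1`.
-/

/-- The second difference `F(x,x) − F(x,y) − F(y,x) + F(y,y)`: for the covariance kernel `F` of a
random field, the variance of its increment between `x` and `y`. -/
def secondDifference {X : Type*} (F : X → X → ℝ) (x y : X) : ℝ :=
  F x x - F x y - F y x + F y y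

section GramProjection

variable {H : Type*} [NormedAddCommGroup H] [InnerProductSpace ℝ H]

instance finiteDimensional_span_range {ι : Type*} [Finite ι] (e : ι → H) :
    FiniteDimensional ℝ (Submodule.span ℝ (Set.range e)) :=
  FiniteDimensional.span_of_finite ℝ (Set.finite_range e)

theorem starProjection_span_range_eq_sum_gram_inv {ι : Type*} [Fintype ι] [DecidableEq ι]
    {e : ι → H} (he : IsUnit (gram ℝ e).det) (u : H) :
    (Submodule.span ℝ (Set.range e)).starProjection u =
      ∑ i, ((gram ℝ e)⁻¹ *ᵥ fun j => inner ℝ (e j) u) i • e i := by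
  set c := (gram ℝ e)⁻¹ *ᵥ fun j => inner ℝ (e j) u
  have hc : gram ℝ e *ᵥ c = fun j => inner ℝ (e j) u := by
    rw [mulVec_mulVec, mul_nonsing_inv _ he, one_mulVec]
  have hmem : ∑ i, c i • e i ∈ Submodule.span ℝ (Set.range e) :=
    Submodule.sum_mem _ fun i _ =>
      Submodule.smul_mem _ _ (Submodule.subset_span (Set.mem_range_self i))
  refine Submodule.eq_starProjection_of_mem_orthogonal hmem ?_
  rw [Submodule.mem_orthogonal]
  intro v hv
  induction hv using Submodule.span_induction with
  | zero => exact inner_zero_left _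
  | add v w _ _ hv hw => rw [inner_add_left, hv, hw, add_zero]
  | smul a v _ hv => rw [real_inner_smul_left, hv, mul_zero]
  | mem v hv =>
    obtain ⟨j, rfl⟩ := hv
    have hj := congrFun hc j
    simp only [mulVec, dotProduct, gram_apply] at hj
    rw [inner_sub_right, inner_sum, ← hj]
    simp only [real_inner_smul_right, mul_comm, sub_self]

theorem inner_orthogonal_starProjection_eq_sub_gram_inv {ι : Type*} [Fintype ι] [DecidableEq ι]
    {e : ι → H} (he : IsUnit (gram ℝ e).det) (u v : H) :
    inner ℝ ((Submodule.span ℝ (Set.range e))ᗮ.starProjection u) v =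
      inner ℝ u v -
        (fun i => inner ℝ (e i) u) ⬝ᵥ ((gram ℝ e)⁻¹ *ᵥ fun i => inner ℝ (e i) v) := by
  rw [Submodule.inner_starProjection_left_eq_right, Submodule.starProjection_orthogonal_val,
    inner_sub_right, starProjection_span_range_eq_sum_gram_inv he, inner_sum]
  simp only [dotProduct, real_inner_smul_right, real_inner_comm u, mul_comm]

theorem abs_secondDifference_inner_le {X : Type*} (T : H →L[ℝ] H) (Ψ : X → H) (x y : X) :
    |secondDifference (fun a b => inner ℝ (T (Ψ a)) (Ψ b)) x y| ≤ ‖T‖ * ‖Ψ x - Ψ y‖ ^ 2 := by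
  have hpolar : secondDifference (fun a b => inner ℝ (T (Ψ a)) (Ψ b)) x y =
      inner ℝ (T (Ψ x - Ψ y)) (Ψ x - Ψ y) := by
    simp only [secondDifference, map_sub, inner_sub_left, inner_sub_right]
    ring
  calc |secondDifference (fun a b => inner ℝ (T (Ψ a)) (Ψ b)) x y|
      ≤ ‖T (Ψ x - Ψ y)‖ * ‖Ψ x - Ψ y‖ := hpolar ▸ abs_real_inner_le_norm _ _
    _ ≤ ‖T‖ * ‖Ψ x - Ψ y‖ * ‖Ψ x - Ψ y‖ := by gcongr; exact T.le_opNorm _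
    _ = ‖T‖ * ‖Ψ x - Ψ y‖ ^ 2 := by ring

end GramProjection

section FeatureMap

variable {H : Type*} [NormedAddCommGroup H] [InnerProductSpace ℝ H] {α : ℝ} {d : ℕ}
  {Φ Ψ : (Fin d → ℝ) → H} {k : Fin d → ℕ}

theorem condK_eq_inner_orthogonal_starProjection
    (hΦ : ∀ x y, matern α d (x - y) = inner ℝ (Φ x) (Φ y)) {n : ℕ} {w : Fin n → Fin d → ℝ}
    (hw : IsUnit (maternMat α d w).det) (x y : Fin d → ℝ) :
    condK α d w x y =
      inner ℝ ((Submodule.span ℝ (Set.range (Φ ∘ w)))ᗮ.starProjection (Φ x)) (Φ y) := by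
  have hgram : maternMat α d w = gram ℝ (Φ ∘ w) := by
    ext i j
    exact hΦ (w i) (w j)
  have hvec (z : Fin d → ℝ) : maternVec α d w z = fun i => inner ℝ ((Φ ∘ w) i) (Φ z) :=
    funext fun i => hΦ (w i) z
  rw [hgram] at hw
  rw [inner_orthogonal_starProjection_eq_sub_gram_inv hw, condK, hΦ, hgram, hvec, hvec]

theorem mder2_inner_of_isSymmetric
    (hΨ : ∀ u x, mder d k (fun z => inner ℝ u (Φ z)) x = inner ℝ u (Ψ x)) {T : H →L[ℝ] H}
    (hT : T.IsSymmetric) (x y : Fin d → ℝ) :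
    mder2 d k k (fun a b => inner ℝ (T (Φ a)) (Φ b)) x y = inner ℝ (T (Ψ x)) (Ψ y) := by
  have hswap (u v : H) : inner ℝ (T u) v = inner ℝ (T v) u := by
    rw [real_inner_comm]
    exact (hT v u).symm
  calc mder2 d k k (fun a b => inner ℝ (T (Φ a)) (Φ b)) x y
      = mder d k (fun z => inner ℝ (T (Φ z)) (Ψ y)) x := by simp only [mder2, hΨ]
    _ = mder d k (fun z => inner ℝ (T (Ψ y)) (Φ z)) x := by simp only [hswap _ (Ψ y)]
    _ = inner ℝ (T (Ψ x)) (Ψ y) := by rw [hΨ, hswap]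

theorem abs_secondDifference_mder2_condK_le
    (hΦ : ∀ x y, matern α d (x - y) = inner ℝ (Φ x) (Φ y))
    (hΨ : ∀ u x, mder d k (fun z => inner ℝ u (Φ z)) x = inner ℝ u (Ψ x)) {n : ℕ}
    {w : Fin n → Fin d → ℝ} (hw : IsUnit (maternMat α d w).det) (x y : Fin d → ℝ) :
    |secondDifference (mder2 d k k (condK α d w)) x y| ≤ ‖Ψ x - Ψ y‖ ^ 2 := by
  set K := Submodule.span ℝ (Set.range (Φ ∘ w))
  have hcond : condK α d w = fun a b => inner ℝ (Kᗮ.starProjection (Φ a)) (Φ b) :=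
    funext₂ (condK_eq_inner_orthogonal_starProjection hΦ hw)
  rw [hcond, funext₂ (mder2_inner_of_isSymmetric hΨ Kᗮ.starProjection_isSymmetric)]
  exact (abs_secondDifference_inner_le _ Ψ x y).trans
    (mul_le_of_le_one_left (sq_nonneg _) Kᗮ.starProjection_norm_le)

end FeatureMap

section MultiIndexDerivative

variable {d : ℕ} {N : ℕ} {f : (Fin d → ℕ) → (Fin d → ℝ) → ℝ}

theorem iterate_pder_eq_of_forall_pder_eq
    (hf : ∀ k j, ∑ i, k i < N → pder d j (f k) = f (k + Pi.single j 1)) {k : Fin d → ℕ}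
    {j : Fin d} {m : ℕ} (hk : ∑ i, k i + m ≤ N) :
    (pder d j)^[m] (f k) = f (k + Pi.single j m) := by
  induction m with
  | zero => rw [Pi.single_zero, add_zero, Function.iterate_zero_apply]
  | succ m ih =>
    have hlt : ∑ i, (k + Pi.single j m : Fin d → ℕ) i < N := by
      simp only [Pi.add_apply, Finset.sum_add_distrib, Finset.sum_pi_single',
        Finset.mem_univ, if_true]
      omega
    rw [Function.iterate_succ_apply', ih (by omega), hf _ _ hlt, add_assoc, ← Pi.single_add]

theorem mder_eq_of_forall_pder_eq
    (hf : ∀ k j, ∑ i, k i < N → pder d j (f k) = f (k + Pi.single j 1)) {k : Fin d → ℕ}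
    (hk : ∑ i, k i ≤ N) : mder d k (f 0) = f k := by
  have horder (l : List (Fin d)) :
      ∑ i, (l.map fun j => (Pi.single j (k j) : Fin d → ℕ)).sum i = (l.map k).sum := by
    induction l with
    | nil => simp
    | cons j l ih => simp [Finset.sum_add_distrib, ih]
  have hfoldr (l : List (Fin d)) (hl : (l.map k).sum ≤ N) :
      l.foldr (fun j g => (pder d j)^[k j] g) (f 0) = f (l.map fun j => Pi.single j (k j)).sum := by
    induction l with
    | nil => rfl
    | cons j l ih =>
      rw [List.map_cons, List.sum_cons] at hl ⊢
      rw [List.foldr_cons, ih (by omega),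
        iterate_pder_eq_of_forall_pder_eq hf (by rw [horder]; omega), add_comm]
  rw [mder, hfoldr _ (by rwa [← Fin.sum_univ_def]), ← Fin.sum_univ_def, Finset.univ_sum_single]

end MultiIndexDerivative

section L2

variable {X 𝕜 E : Type*} [MeasurableSpace X] {μ : Measure X} [RCLike 𝕜] [NormedAddCommGroup E]
  [InnerProductSpace 𝕜 E]

theorem inner_toLp {f g : X → E} (hf : MemLp f 2 μ) (hg : MemLp g 2 μ) :
    inner 𝕜 (hf.toLp f) (hg.toLp g) = ∫ a, inner 𝕜 (f a) (g a) ∂μ := by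
  rw [L2.inner_def]
  refine integral_congr_ae ?_
  filter_upwards [hf.coeFn_toLp, hg.coeFn_toLp] with a hfa hga
  rw [hfa, hga]

end L2

section FourierFeature

variable {d : ℕ} {μ : Measure (Fin d → ℝ)} {N : ℕ} {g : (Fin d → ℝ) → ℂ} {k : Fin d → ℕ}

/-- The character `ξ ↦ exp (i⟨x, ξ⟩)` of `ℝ^d`. -/
def phase (x ξ : Fin d → ℝ) : ℂ :=
  Complex.exp (Complex.I * ((x ⬝ᵥ ξ : ℝ) : ℂ))

/-- The Fourier symbol `(iξ)^k` of the partial derivative `∂^k`. -/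
def symbol (k : Fin d → ℕ) (ξ : Fin d → ℝ) : ℂ :=
  ∏ j, (Complex.I * ξ j) ^ k j

/-- The real part of the Fourier transform of the complex measure `g μ`, with the sign and
normalization of `phase`. -/
def reFourier (μ : Measure (Fin d → ℝ)) (g : (Fin d → ℝ) → ℂ) (x : Fin d → ℝ) : ℝ :=
  (∫ ξ, phase x ξ * g ξ ∂μ).re

theorem continuous_phase (x : Fin d → ℝ) : Continuous (phase x) := by
  unfold phase dotProduct
  fun_prop

theorem norm_phase (x ξ : Fin d → ℝ) : ‖phase x ξ‖ = 1 :=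
  Complex.norm_exp_I_mul_ofReal _

theorem phase_add (x y ξ : Fin d → ℝ) : phase (x + y) ξ = phase x ξ * phase y ξ := by
  rw [phase, phase, phase, ← Complex.exp_add, add_dotProduct, Complex.ofReal_add, mul_add]

theorem inner_phase (x y ξ : Fin d → ℝ) :
    inner ℝ (phase x ξ) (phase y ξ) = Real.cos ((x - y) ⬝ᵥ ξ) := by
  have hmul : phase x ξ * starRingEnd ℂ (phase y ξ) =
      Complex.exp (((x - y) ⬝ᵥ ξ : ℝ) * Complex.I) := by
    rw [phase, phase, ← Complex.exp_conj, ← Complex.exp_add, map_mul, Complex.conj_I,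
      Complex.conj_ofReal, sub_dotProduct]
    push_cast
    ring_nf
  rw [real_inner_comm, Complex.inner, hmul, Complex.exp_ofReal_mul_I_re]

theorem continuous_symbol (k : Fin d → ℕ) : Continuous (symbol k) := by
  unfold symbol
  fun_prop

theorem symbol_zero (ξ : Fin d → ℝ) : symbol 0 ξ = 1 := by
  simp [symbol]

theorem symbol_add_single (k : Fin d → ℕ) (j : Fin d) (ξ : Fin d → ℝ) :
    symbol (k + Pi.single j 1) ξ = Complex.I * ξ j * symbol k ξ := by
  simp only [symbol, Pi.add_apply, pow_add, Finset.prod_mul_distrib]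
  rw [mul_comm, Fintype.prod_eq_single j fun i hi => by rw [Pi.single_eq_of_ne hi, pow_zero],
    Pi.single_eq_same, pow_one]

theorem norm_symbol_le (k : Fin d → ℕ) (ξ : Fin d → ℝ) : ‖symbol k ξ‖ ≤ ‖ξ‖ ^ ∑ j, k j := by
  rw [symbol, norm_prod, ← Finset.prod_pow_eq_pow_sum]
  refine Finset.prod_le_prod (fun _ _ => norm_nonneg _) fun j _ => ?_
  rw [norm_pow, norm_mul, Complex.norm_I, one_mul, Complex.norm_real]
  exact pow_le_pow_left₀ (norm_nonneg _) (norm_le_pi_norm ξ j) _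

theorem norm_symbol_le_one_add_pow (hk : ∑ j, k j ≤ N) (ξ : Fin d → ℝ) :
    ‖symbol k ξ‖ ≤ (1 + ‖ξ‖) ^ N := by
  have h1 : 1 ≤ 1 + ‖ξ‖ := le_add_of_nonneg_right (norm_nonneg ξ)
  calc ‖symbol k ξ‖ ≤ ‖ξ‖ ^ ∑ j, k j := norm_symbol_le k ξ
    _ ≤ (1 + ‖ξ‖) ^ ∑ j, k j := by gcongr; linarith
    _ ≤ (1 + ‖ξ‖) ^ N := pow_le_pow_right₀ h1 hk

/-- The bilinear form `-⟨x, ξ⟩ / (2π)`, for which `VectorFourier.fourierIntegral` has the sign and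
normalization of `reFourier`. -/
def fourierForm (d : ℕ) : (Fin d → ℝ) →L[ℝ] (Fin d → ℝ) →L[ℝ] ℝ :=
  -(2 * Real.pi)⁻¹ • (dotProductBilin ℝ ℝ).toContinuousBilinearMap

theorem fourierForm_apply (ξ x : Fin d → ℝ) : fourierForm d ξ x = -(2 * Real.pi)⁻¹ * (ξ ⬝ᵥ x) :=
  rfl

theorem fourierChar_neg_fourierForm (x ξ : Fin d → ℝ) :
    (Real.fourierChar (-fourierForm d ξ x) : ℂ) = phase x ξ := by
  rw [fourierForm_apply, Real.fourierChar_apply, phase, dotProduct_comm ξ]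
  congr 1
  push_cast
  field_simp

theorem reFourier_eq_re_fourierIntegral (g : (Fin d → ℝ) → ℂ) (x : Fin d → ℝ) :
    reFourier μ g x =
      (VectorFourier.fourierIntegral Real.fourierChar μ (fourierForm d).toLinearMap₁₂ g x).re := by
  simp only [reFourier, ← fourierChar_neg_fourierForm]
  rfl

theorem pder_reFourier (hg : Integrable g μ) (hg' : Integrable (fun ξ => ‖ξ‖ * ‖g ξ‖) μ)
    (j : Fin d) : pder d j (reFourier μ g) = reFourier μ fun ξ => Complex.I * ξ j * g ξ := by
  have hderiv (x : Fin d → ℝ) := Complex.reCLM.hasFDerivAt.comp x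
    (VectorFourier.hasFDerivAt_fourierIntegral (fourierForm d) hg hg' x)
  have hint : Integrable (VectorFourier.fourierSMulRight (fourierForm d) g) μ := by
    refine (hg'.const_mul (2 * Real.pi * ‖fourierForm d‖)).mono'
      hg.aestronglyMeasurable.fourierSMulRight (ae_of_all _ fun ξ => ?_)
    rw [← mul_assoc]
    exact VectorFourier.norm_fourierSMulRight_le _ _ ξ
  have hsymbol (ξ : Fin d → ℝ) :
      VectorFourier.fourierSMulRight (fourierForm d) g ξ (Pi.single j 1) =
        Complex.I * ξ j * g ξ := by
    rw [VectorFourier.fourierSMulRight_apply, fourierForm_apply, dotProduct_single_one,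
      Complex.real_smul, smul_eq_mul]
    push_cast
    field_simp
  funext x
  rw [pder, funext (reFourier_eq_re_fourierIntegral g), reFourier_eq_re_fourierIntegral]
  simp only [← hsymbol]
  rw [← Real.fourierIntegral_continuousLinearMap_apply' hint]
  exact congrArg (fun f' => f' (Pi.single j 1)) (hderiv x).fderiv

theorem integrable_mul_of_norm_le_one_add_pow {p : (Fin d → ℝ) → ℂ}
    (hg : Integrable (fun ξ => (1 + ‖ξ‖) ^ N • g ξ) μ) (hp : Continuous p)
    (hpN : ∀ ξ, ‖p ξ‖ ≤ (1 + ‖ξ‖) ^ N) : Integrable (fun ξ => p ξ * g ξ) μ := by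
  have hpos (ξ : Fin d → ℝ) : 0 < (1 + ‖ξ‖) ^ N := by positivity
  have hq : Continuous fun ξ : Fin d → ℝ => ((1 + ‖ξ‖) ^ N)⁻¹ • p ξ :=
    (Continuous.inv₀ (by fun_prop) fun ξ => (hpos ξ).ne').smul hp
  refine (hg.bdd_mul hq.aestronglyMeasurable (c := 1) (ae_of_all _ fun ξ => ?_)).congr
    (ae_of_all _ fun ξ => ?_)
  · rw [norm_smul, norm_inv, Real.norm_of_nonneg (hpos ξ).le]
    exact inv_mul_le_one_of_le₀ (hpN ξ) (hpos ξ).le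
  · simp only [smul_mul_smul_comm, inv_mul_cancel₀ (hpos ξ).ne', one_smul]

theorem mder_reFourier (hg : Integrable (fun ξ => (1 + ‖ξ‖) ^ N • g ξ) μ) (hk : ∑ j, k j ≤ N) :
    mder d k (reFourier μ g) = reFourier μ fun ξ => symbol k ξ * g ξ := by
  have hstep (k : Fin d → ℕ) (j : Fin d) (hk : ∑ i, k i < N) :
      pder d j (reFourier μ fun ξ => symbol k ξ * g ξ) =
        reFourier μ fun ξ => symbol (k + Pi.single j 1) ξ * g ξ := by
    have hint : Integrable (fun ξ => symbol k ξ * g ξ) μ :=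
      integrable_mul_of_norm_le_one_add_pow hg (continuous_symbol k)
        (norm_symbol_le_one_add_pow hk.le)
    have hint' : Integrable (fun ξ => ‖ξ‖ * ‖symbol k ξ * g ξ‖) μ := by
      have hcont : Continuous fun ξ => (‖ξ‖ : ℂ) * symbol k ξ :=
        (by fun_prop : Continuous fun ξ : Fin d → ℝ => (‖ξ‖ : ℂ)).mul (continuous_symbol k)
      have hbound (ξ : Fin d → ℝ) : ‖(‖ξ‖ : ℂ) * symbol k ξ‖ ≤ (1 + ‖ξ‖) ^ N := by
        rw [norm_mul, Complex.norm_real, norm_norm]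
        calc ‖ξ‖ * ‖symbol k ξ‖ ≤ (1 + ‖ξ‖) * (1 + ‖ξ‖) ^ (N - 1) := by
              gcongr
              · linarith
              · exact norm_symbol_le_one_add_pow (Nat.le_sub_one_of_lt hk) ξ
          _ = (1 + ‖ξ‖) ^ N := mul_pow_sub_one (by omega) _
      simpa only [norm_mul, Complex.norm_real, norm_norm, mul_assoc] using
        (integrable_mul_of_norm_le_one_add_pow hg hcont hbound).norm
    simp only [pder_reFourier hint hint', symbol_add_single, mul_assoc]
  simpa only [symbol_zero, one_mul] using
    mder_eq_of_forall_pder_eq (f := fun k => reFourier μ fun ξ => symbol k ξ * g ξ) hstep hk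

theorem memLp_symbol_mul_phase (hμ : MemLp (fun ξ => (1 + ‖ξ‖) ^ N) 2 μ) (hk : ∑ j, k j ≤ N)
    (x : Fin d → ℝ) : MemLp (fun ξ => symbol k ξ * phase x ξ) 2 μ := by
  refine hμ.mono ((continuous_symbol k).mul (continuous_phase x)).aestronglyMeasurable
    (ae_of_all _ fun ξ => ?_)
  rw [norm_mul, norm_phase, mul_one, Real.norm_of_nonneg (by positivity)]
  exact norm_symbol_le_one_add_pow hk ξ

/-- The feature `ξ ↦ (iξ)^k exp (i⟨x, ξ⟩)` in `L²(μ)`: the derivative `∂^k` in `x` of the feature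
map of the stationary kernel with spectral measure `μ`. -/
def fourierFeature (hμ : MemLp (fun ξ => (1 + ‖ξ‖) ^ N) 2 μ) (hk : ∑ j, k j ≤ N)
    (x : Fin d → ℝ) : Lp ℂ 2 μ :=
  (memLp_symbol_mul_phase hμ hk x).toLp _

theorem inner_fourierFeature_zero (hμ : MemLp (fun ξ => (1 + ‖ξ‖) ^ N) 2 μ)
    (h0 : ∑ j, (0 : Fin d → ℕ) j ≤ N) (x y : Fin d → ℝ) :
    inner ℝ (fourierFeature hμ h0 x) (fourierFeature hμ h0 y) =
      ∫ ξ, Real.cos ((x - y) ⬝ᵥ ξ) ∂μ := by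
  simp only [fourierFeature, inner_toLp, symbol_zero, one_mul, inner_phase]

theorem norm_fourierFeature_sub_sq (hμ : MemLp (fun ξ => (1 + ‖ξ‖) ^ N) 2 μ)
    (hk : ∑ j, k j ≤ N) (x y : Fin d → ℝ) :
    ‖fourierFeature hμ hk x - fourierFeature hμ hk y‖ ^ 2 =
      ∫ ξ, (‖symbol k ξ‖ * ‖phase x ξ - phase y ξ‖) ^ 2 ∂μ := by
  rw [fourierFeature, fourierFeature, ← MemLp.toLp_sub, ← real_inner_self_eq_norm_sq, inner_toLp]
  simp only [Pi.sub_apply, ← mul_sub, real_inner_self_eq_norm_sq, norm_mul]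

theorem integrable_one_add_pow_smul_conj (hμ : MemLp (fun ξ => (1 + ‖ξ‖) ^ N) 2 μ)
    (u : Lp ℂ 2 μ) : Integrable (fun ξ => (1 + ‖ξ‖) ^ N • starRingEnd ℂ (u ξ)) μ :=
  memLp_one_iff_integrable.1 ((Lp.memLp u).star.smul hμ)

theorem inner_fourierFeature_eq_reFourier (hμ : MemLp (fun ξ => (1 + ‖ξ‖) ^ N) 2 μ)
    (hk : ∑ j, k j ≤ N) (u : Lp ℂ 2 μ) (x : Fin d → ℝ) :
    inner ℝ u (fourierFeature hμ hk x) =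
      reFourier μ (fun ξ => symbol k ξ * starRingEnd ℂ (u ξ)) x := by
  have hint : Integrable (fun ξ => phase x ξ * symbol k ξ * starRingEnd ℂ (u ξ)) μ := by
    refine integrable_mul_of_norm_le_one_add_pow (integrable_one_add_pow_smul_conj hμ u)
      ((continuous_phase x).mul (continuous_symbol k)) fun ξ => ?_
    rw [norm_mul, norm_phase, one_mul]
    exact norm_symbol_le_one_add_pow hk ξ
  calc inner ℝ u (fourierFeature hμ hk x)
      = ∫ ξ, inner ℝ (u ξ) (symbol k ξ * phase x ξ) ∂μ := by
        conv_lhs => rw [← Lp.toLp_coeFn u (Lp.memLp u), fourierFeature, inner_toLp]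
    _ = ∫ ξ, (phase x ξ * symbol k ξ * starRingEnd ℂ (u ξ)).re ∂μ := by
        simp only [Complex.inner, mul_comm]
    _ = reFourier μ (fun ξ => symbol k ξ * starRingEnd ℂ (u ξ)) x := by
        simp only [reFourier, ← mul_assoc]
        exact integral_re hint

theorem mder_inner_fourierFeature (hμ : MemLp (fun ξ => (1 + ‖ξ‖) ^ N) 2 μ)
    (h0 : ∑ j, (0 : Fin d → ℕ) j ≤ N) (hk : ∑ j, k j ≤ N) (u : Lp ℂ 2 μ) (x : Fin d → ℝ) :
    mder d k (fun z => inner ℝ u (fourierFeature hμ h0 z)) x =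
      inner ℝ u (fourierFeature hμ hk x) := by
  simp only [inner_fourierFeature_eq_reFourier, symbol_zero, one_mul]
  exact congrFun (mder_reFourier (integrable_one_add_pow_smul_conj hμ u) hk) x

end FourierFeature

section SpectralMeasure

variable {α : ℝ} {d m : ℕ}

/-- The spectral density of the Matérn kernel. -/
def maternDensity (α : ℝ) (d : ℕ) (ξ : Fin d → ℝ) : ℝ :=
  (1 + ∑ j, ξ j ^ 2) ^ (-(α + (d : ℝ) / 2))

/-- The spectral measure of the Matérn kernel. -/
def maternMeasure (α : ℝ) (d : ℕ) : Measure (Fin d → ℝ) :=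
  volume.withDensity fun ξ => ((maternDensity α d ξ).toNNReal : ENNReal)

theorem maternDensity_nonneg (α : ℝ) (d : ℕ) (ξ : Fin d → ℝ) : 0 ≤ maternDensity α d ξ :=
  Real.rpow_nonneg (by positivity) _

theorem continuous_maternDensity (α : ℝ) (d : ℕ) : Continuous (maternDensity α d) := by
  refine Continuous.rpow_const (by fun_prop) fun ξ => Or.inl ?_
  have : 0 ≤ ∑ j, ξ j ^ 2 := Finset.sum_nonneg fun j _ => sq_nonneg _
  positivity

theorem integral_maternMeasure (α : ℝ) (d : ℕ) (f : (Fin d → ℝ) → ℝ) :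
    ∫ ξ, f ξ ∂maternMeasure α d = ∫ ξ, maternDensity α d ξ * f ξ := by
  rw [maternMeasure, integral_withDensity_eq_integral_smul
    (continuous_maternDensity α d).measurable.real_toNNReal]
  simp only [NNReal.smul_def, Real.coe_toNNReal _ (maternDensity_nonneg α d _), smul_eq_mul]

theorem integrable_maternMeasure_iff (α : ℝ) (d : ℕ) (f : (Fin d → ℝ) → ℝ) :
    Integrable f (maternMeasure α d) ↔ Integrable fun ξ => maternDensity α d ξ * f ξ := by
  rw [maternMeasure, integrable_withDensity_iff_integrable_smul
    (continuous_maternDensity α d).measurable.real_toNNReal]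
  simp only [NNReal.smul_def, Real.coe_toNNReal _ (maternDensity_nonneg α d _), smul_eq_mul]

theorem matern_eq_integral_maternMeasure (α : ℝ) (d : ℕ) (x : Fin d → ℝ) :
    matern α d x = ∫ ξ, Real.cos (x ⬝ᵥ ξ) ∂maternMeasure α d := by
  rw [integral_maternMeasure]
  simp only [matern, maternDensity, dotProduct, mul_comm]

theorem abs_apply_le_nrm (x : Fin d → ℝ) (j : Fin d) : |x j| ≤ nrm x :=
  Real.abs_le_sqrt (Finset.single_le_sum (f := fun j => x j ^ 2) (fun _ _ => sq_nonneg _)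
    (Finset.mem_univ j))

theorem norm_sq_le_sum_sq (x : Fin d → ℝ) : ‖x‖ ^ 2 ≤ ∑ j, x j ^ 2 := by
  have hle : ‖x‖ ≤ nrm x := (pi_norm_le_iff_of_nonneg (Real.sqrt_nonneg _)).2 (abs_apply_le_nrm x)
  calc ‖x‖ ^ 2 ≤ nrm x ^ 2 := by gcongr
    _ = ∑ j, x j ^ 2 := Real.sq_sqrt (Finset.sum_nonneg fun j _ => sq_nonneg _)

theorem maternDensity_le (hα : 0 ≤ α) (ξ : Fin d → ℝ) :
    maternDensity α d ξ ≤ (1 + ‖ξ‖ ^ 2) ^ (-(α + (d : ℝ) / 2)) :=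
  Real.rpow_le_rpow_of_nonpos (by positivity) (by gcongr; exact norm_sq_le_sum_sq ξ)
    (neg_nonpos.2 (by positivity))

theorem memLp_one_add_pow_maternMeasure (hm : (m : ℝ) < α) :
    MemLp (fun ξ : Fin d → ℝ => (1 + ‖ξ‖) ^ m) 2 (maternMeasure α d) := by
  have hα : 0 < α := m.cast_nonneg.trans_lt hm
  have hcont := continuous_maternDensity α d
  rw [memLp_two_iff_integrable_sq (Continuous.aestronglyMeasurable (by fun_prop)),
    integrable_maternMeasure_iff]
  have hint : Integrable fun ξ : Fin d → ℝ => (1 + ‖ξ‖) ^ (-(2 * α + d - 2 * m)) :=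
    integrable_one_add_norm (by rw [Module.finrank_fin_fun]; linarith)
  refine (hint.const_mul (2 ^ ((2 * α + d) / 2))).mono'
    (Continuous.aestronglyMeasurable (by fun_prop)) (ae_of_all _ fun ξ => ?_)
  rw [Real.norm_of_nonneg (mul_nonneg (maternDensity_nonneg α d ξ) (by positivity))]
  calc maternDensity α d ξ * ((1 + ‖ξ‖) ^ m) ^ 2
      ≤ (1 + ‖ξ‖ ^ 2) ^ (-(2 * α + d) / 2) * ((1 + ‖ξ‖) ^ m) ^ 2 := by
        gcongr
        exact (maternDensity_le hα.le ξ).trans_eq (by congr 1; ring)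
    _ ≤ 2 ^ ((2 * α + d) / 2) * (1 + ‖ξ‖) ^ (-(2 * α + d)) * ((1 + ‖ξ‖) ^ m) ^ 2 := by
        gcongr
        exact rpow_neg_one_add_norm_sq_le ξ (by positivity)
    _ = 2 ^ ((2 * α + d) / 2) * (1 + ‖ξ‖) ^ (-(2 * α + d - 2 * m)) := by
        rw [mul_assoc, ← pow_mul, ← Real.rpow_natCast, ← Real.rpow_add (by positivity)]
        push_cast
        ring_nf

end SpectralMeasure

section Radial

variable {β c t y : ℝ}

/-- The radial profile of the spectral integral for the second difference at distance `t`: the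
multiplier is at most `min 4 (c (t y) ^ 2)` at frequency radius `y`, and the spectral density,
weighted by the order of differentiation and the Jacobian, decays like `y ^ (-(2 * β + 1))`. -/
def radialBound (β c t y : ℝ) : ℝ :=
  min 4 (c * (t * y) ^ 2) * (1 + y ^ 2) ^ (-(β + 1 / 2))

theorem continuous_radialBound (β c t : ℝ) : Continuous (radialBound β c t) := by
  refine Continuous.mul (by fun_prop) (Continuous.rpow_const (by fun_prop) fun y => Or.inl ?_)
  positivity

theorem radialBound_nonneg (hc : 0 ≤ c) (β t y : ℝ) : 0 ≤ radialBound β c t y :=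
  mul_nonneg (le_min (by norm_num) (by positivity)) (Real.rpow_nonneg (by positivity) _)

theorem one_add_sq_rpow_le {s : ℝ} (hs : s ≤ 0) (hy : 0 < y) :
    (1 + y ^ 2) ^ s ≤ y ^ (2 * s) := by
  rw [Real.rpow_mul hy.le, Real.rpow_two]
  exact Real.rpow_le_rpow_of_nonpos (by positivity) (by linarith) hs

theorem radialBound_le_four_mul (hβ : 0 ≤ β) (hy : 0 < y) :
    radialBound β c t y ≤ 4 * y ^ (-(2 * β + 1)) := by
  refine mul_le_mul (min_le_left _ _) ?_ (by positivity) (by norm_num)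
  exact (one_add_sq_rpow_le (by linarith) hy).trans_eq (by ring_nf)

theorem radialBound_le_of_le_one (hβ : 0 ≤ β) (hc : 0 ≤ c) (hy : 0 ≤ y) (hy1 : y ≤ 1) :
    radialBound β c t y ≤ c * t ^ 2 :=
  calc radialBound β c t y ≤ c * (t * y) ^ 2 * 1 :=
        mul_le_mul (min_le_right _ _)
          (Real.rpow_le_one_of_one_le_of_nonpos (by nlinarith) (by linarith)) (by positivity)
          (by positivity)
    _ = c * t ^ 2 * y ^ 2 := by ring
    _ ≤ c * t ^ 2 := mul_le_of_le_one_right (by positivity) (pow_le_one₀ hy hy1)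

theorem radialBound_le_sq_mul (hβ : 0 ≤ β) (hc : 0 ≤ c) (hy : 0 < y) :
    radialBound β c t y ≤ c * t ^ 2 * y ^ (1 - 2 * β) :=
  calc radialBound β c t y ≤ c * (t * y) ^ 2 * y ^ (2 * -(β + 1 / 2)) :=
        mul_le_mul (min_le_right _ _) (one_add_sq_rpow_le (by linarith) hy) (by positivity)
          (by positivity)
    _ = c * t ^ 2 * (y ^ (2 : ℝ) * y ^ (2 * -(β + 1 / 2))) := by rw [Real.rpow_two]; ring
    _ = c * t ^ 2 * y ^ (1 - 2 * β) := by rw [← Real.rpow_add hy]; ring_nf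

theorem integrableOn_radialBound (hβ : 0 < β) (hc : 0 ≤ c) (t : ℝ) :
    IntegrableOn (radialBound β c t) (Set.Ioi 0) := by
  have hcont := continuous_radialBound β c t
  rw [← Set.Ioc_union_Ioi_eq_Ioi zero_le_one]
  refine hcont.integrableOn_Ioc.union ?_
  refine Integrable.mono' ((integrableOn_Ioi_rpow_of_lt (a := -(2 * β + 1)) (by linarith)
    zero_lt_one).const_mul 4) hcont.aestronglyMeasurable ?_
  refine ae_restrict_of_forall_mem measurableSet_Ioi fun y (hy : 1 < y) => ?_
  rw [Real.norm_of_nonneg (radialBound_nonneg hc _ _ _)]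
  exact radialBound_le_four_mul hβ.le (by linarith)

theorem integral_Ioc_zero_one_radialBound_le (hβ : 0 ≤ β) (hc : 0 ≤ c) :
    ∫ y in Set.Ioc 0 1, radialBound β c t y ≤ c * t ^ 2 := by
  have hconst : IntegrableOn (fun _ : ℝ => c * t ^ 2) (Set.Ioc 0 1) :=
    continuous_const.integrableOn_Ioc
  have hle := setIntegral_mono_on (continuous_radialBound β c t).integrableOn_Ioc hconst
    measurableSet_Ioc fun y hy => radialBound_le_of_le_one hβ hc hy.1.le hy.2
  simpa using hle

theorem integral_Ioc_one_radialBound_le (hβ : 0 ≤ β) (hc : 0 ≤ c) {b : ℝ} (hb : 1 ≤ b) :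
    ∫ y in Set.Ioc 1 b, radialBound β c t y ≤ c * t ^ 2 * ∫ y in (1 : ℝ)..b, y ^ (1 - 2 * β) := by
  have h0 : (0 : ℝ) ∉ Set.uIcc 1 b := Set.notMem_uIcc_of_lt one_pos (one_pos.trans_le hb)
  have hint : IntegrableOn (fun y : ℝ => y ^ (1 - 2 * β)) (Set.Ioc 1 b) :=
    (intervalIntegrable_iff_integrableOn_Ioc_of_le hb).1
      (intervalIntegral.intervalIntegrable_rpow (Or.inr h0))
  rw [intervalIntegral.integral_of_le hb, ← integral_const_mul]
  exact setIntegral_mono_on (continuous_radialBound β c t).integrableOn_Ioc (hint.const_mul _)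
    measurableSet_Ioc fun y hy => radialBound_le_sq_mul hβ hc (one_pos.trans hy.1)

theorem integral_Ioi_radialBound_le (hβ : 0 < β) (hc : 0 ≤ c) {b : ℝ} (hb : 0 < b) :
    ∫ y in Set.Ioi b, radialBound β c t y ≤ 2 / β * b ^ (-(2 * β)) :=
  calc ∫ y in Set.Ioi b, radialBound β c t y ≤ ∫ y in Set.Ioi b, 4 * y ^ (-(2 * β + 1)) :=
        setIntegral_mono_on ((integrableOn_radialBound hβ hc t).mono_set (Set.Ioi_subset_Ioi hb.le))
          ((integrableOn_Ioi_rpow_of_lt (by linarith) hb).const_mul 4) measurableSet_Ioi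
          fun y hy => radialBound_le_four_mul hβ.le (hb.trans hy)
    _ = 2 / β * b ^ (-(2 * β)) := by
        rw [integral_const_mul, integral_Ioi_rpow_of_lt (by linarith) hb, neg_add_rev,
          neg_add_cancel_comm]
        field_simp
        norm_num

theorem integral_radialBound_le (hβ : 0 < β) (hc : 0 ≤ c) (ht : 0 < t) (ht1 : t ≤ 1) :
    ∫ y in Set.Ioi 0, radialBound β c t y ≤
      c * t ^ 2 * (1 + ∫ y in (1 : ℝ)..t⁻¹, y ^ (1 - 2 * β)) + 2 / β * t ^ (2 * β) := by
  have hint := integrableOn_radialBound hβ hc t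
  have hcont := continuous_radialBound β c t
  have htinv : 1 ≤ t⁻¹ := (one_le_inv₀ ht).2 ht1
  have hlow : ∫ y in Set.Ioc 0 1, radialBound β c t y ≤ c * t ^ 2 :=
    integral_Ioc_zero_one_radialBound_le hβ.le hc
  have hmid := integral_Ioc_one_radialBound_le (t := t) hβ.le hc htinv
  have hhigh := integral_Ioi_radialBound_le (t := t) hβ hc (inv_pos.2 ht)
  rw [Real.inv_rpow ht.le, Real.rpow_neg ht.le, inv_inv] at hhigh
  rw [← Set.Ioc_union_Ioi_eq_Ioi (zero_le_one (α := ℝ)),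
    setIntegral_union (Set.Ioc_disjoint_Ioi le_rfl) measurableSet_Ioi hcont.integrableOn_Ioc
      (hint.mono_set (Set.Ioi_subset_Ioi zero_le_one)),
    ← Set.Ioc_union_Ioi_eq_Ioi htinv,
    setIntegral_union (Set.Ioc_disjoint_Ioi le_rfl) measurableSet_Ioi hcont.integrableOn_Ioc
      (hint.mono_set (Set.Ioi_subset_Ioi (by positivity)))]
  linarith

end Radial

section Rate

variable {β c t : ℝ}

/-- The modulus, at distance `t`, of the second difference of a kernel of residual smoothness
`2 * β`: it saturates at order `t ^ 2` once `β > 1`, with a logarithm at the critical `β = 1`. -/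
def secondDifferenceRate (β t : ℝ) : ℝ :=
  if β < 1 then t ^ (2 * β) else if β = 1 then t ^ 2 * Real.log (1 / t) else t ^ 2

theorem half_le_log_one_div (ht : 0 < t) (ht2 : t ≤ 1 / 2) : 1 / 2 ≤ Real.log (1 / t) := by
  have hlog : Real.log 2 ≤ Real.log (1 / t) :=
    Real.log_le_log two_pos ((le_one_div two_pos ht).2 ht2)
  linarith [Real.log_two_gt_d9]

theorem rpow_le_two_mul_secondDifferenceRate {s : ℝ} (ht : 0 < t) (ht2 : t ≤ 1 / 2)
    (hs : 2 * min β 1 ≤ s) : t ^ s ≤ 2 * secondDifferenceRate β t := by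
  have hmin : t ^ s ≤ t ^ (2 * min β 1) :=
    Real.rpow_le_rpow_of_exponent_ge ht (by linarith) hs
  have hnonneg : 0 ≤ t ^ (2 * min β 1) := by positivity
  rw [secondDifferenceRate]
  split_ifs with hlt heq
  · rw [min_eq_left hlt.le] at hmin hnonneg
    linarith
  · rw [heq, min_self, mul_one, Real.rpow_two] at hmin
    nlinarith [half_le_log_one_div ht ht2, sq_nonneg t]
  · rw [min_eq_right (not_lt.1 hlt), mul_one, Real.rpow_two] at hmin
    nlinarith [sq_nonneg t]

theorem sq_mul_integral_rpow (hβ : β ≠ 1) (ht : 0 < t) :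
    t ^ 2 * ∫ y in (1 : ℝ)..t⁻¹, y ^ (1 - 2 * β) = (t ^ (2 * β) - t ^ 2) / (2 - 2 * β) := by
  have h0 : (0 : ℝ) ∉ Set.uIcc 1 t⁻¹ := Set.notMem_uIcc_of_lt one_pos (inv_pos.2 ht)
  have hexp : 1 - 2 * β ≠ -1 := fun h => hβ (by linarith)
  have hpow : t ^ 2 * (t⁻¹) ^ (2 - 2 * β) = t ^ (2 * β) := by
    rw [Real.inv_rpow ht.le, ← Real.rpow_neg ht.le, ← Real.rpow_two, ← Real.rpow_add ht]
    ring_nf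
  rw [integral_rpow (Or.inr ⟨hexp, h0⟩), Real.one_rpow, ← hpow]
  ring_nf

-- At `β = 1` the term `|2 - 2 * β|⁻¹` is the junk value `0⁻¹ = 0`.
theorem sq_mul_integral_rpow_le_rate (ht : 0 < t) :
    t ^ 2 * ∫ y in (1 : ℝ)..t⁻¹, y ^ (1 - 2 * β) ≤
      (1 + |2 - 2 * β|⁻¹) * secondDifferenceRate β t := by
  have hrpow : 0 ≤ t ^ (2 * β) := by positivity
  rw [secondDifferenceRate]
  rcases lt_trichotomy β 1 with hlt | rfl | hgt
  · have hpos : 0 < 2 - 2 * β := by linarith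
    rw [sq_mul_integral_rpow hlt.ne ht, if_pos hlt, abs_of_pos hpos]
    calc (t ^ (2 * β) - t ^ 2) / (2 - 2 * β) ≤ t ^ (2 * β) / (2 - 2 * β) := by
          gcongr
          exact sub_le_self _ (sq_nonneg t)
      _ = (2 - 2 * β)⁻¹ * t ^ (2 * β) := div_eq_inv_mul _ _
      _ ≤ (1 + (2 - 2 * β)⁻¹) * t ^ (2 * β) := by
          gcongr
          exact le_add_of_nonneg_left zero_le_one
  · have hlog : ∫ y in (1 : ℝ)..t⁻¹, y ^ (1 - 2 * (1 : ℝ)) = Real.log (1 / t) := by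
      simp only [show (1 : ℝ) - 2 * 1 = -1 by norm_num, Real.rpow_neg_one]
      rw [integral_inv_of_pos one_pos (inv_pos.2 ht), div_one, one_div]
    rw [hlog]
    simp
  · have hpos : 0 < 2 * β - 2 := by linarith
    rw [sq_mul_integral_rpow hgt.ne' ht, if_neg hgt.not_gt, if_neg hgt.ne', ← neg_sub (2 * β) 2,
      abs_neg, abs_of_pos hpos]
    calc (t ^ (2 * β) - t ^ 2) / -(2 * β - 2) = (t ^ 2 - t ^ (2 * β)) / (2 * β - 2) := by
          rw [div_neg, ← neg_div, neg_sub]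
      _ ≤ t ^ 2 / (2 * β - 2) := by
          gcongr
          exact sub_le_self _ hrpow
      _ = (2 * β - 2)⁻¹ * t ^ 2 := div_eq_inv_mul _ _
      _ ≤ (1 + (2 * β - 2)⁻¹) * t ^ 2 := by
          gcongr
          exact le_add_of_nonneg_left zero_le_one

theorem integral_radialBound_le_rate (hβ : 0 < β) (hc : 0 ≤ c) (ht : 0 < t) (ht2 : t ≤ 1 / 2) :
    ∫ y in Set.Ioi 0, radialBound β c t y ≤
      (c * (3 + |2 - 2 * β|⁻¹) + 4 / β) * secondDifferenceRate β t := by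
  have hsq : t ^ 2 ≤ 2 * secondDifferenceRate β t := by
    rw [← Real.rpow_two]
    exact rpow_le_two_mul_secondDifferenceRate ht ht2 (by linarith [min_le_right β 1])
  have hrpow : t ^ (2 * β) ≤ 2 * secondDifferenceRate β t :=
    rpow_le_two_mul_secondDifferenceRate ht ht2 (by linarith [min_le_left β 1])
  have hmid := sq_mul_integral_rpow_le_rate (β := β) ht
  calc ∫ y in Set.Ioi 0, radialBound β c t y
      ≤ c * t ^ 2 * (1 + ∫ y in (1 : ℝ)..t⁻¹, y ^ (1 - 2 * β)) + 2 / β * t ^ (2 * β) :=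
        integral_radialBound_le hβ hc ht (by linarith)
    _ = c * (t ^ 2 + t ^ 2 * ∫ y in (1 : ℝ)..t⁻¹, y ^ (1 - 2 * β)) + 2 / β * t ^ (2 * β) := by
        ring
    _ ≤ c * (2 * secondDifferenceRate β t + (1 + |2 - 2 * β|⁻¹) * secondDifferenceRate β t) +
          2 / β * (2 * secondDifferenceRate β t) :=
        add_le_add (mul_le_mul_of_nonneg_left (add_le_add hsq hmid) hc)
          (mul_le_mul_of_nonneg_left hrpow (by positivity))
    _ = (c * (3 + |2 - 2 * β|⁻¹) + 4 / β) * secondDifferenceRate β t := by ring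

end Rate

section PolarCoordinates

variable {E : Type*} [NormedAddCommGroup E] [NormedSpace ℝ E] [FiniteDimensional ℝ E]
  [Nontrivial E] [MeasurableSpace E] [BorelSpace E]

theorem integral_le_of_le_fun_norm (μ : Measure E) [μ.IsAddHaarMeasure] {g : E → ℝ}
    {f q : ℝ → ℝ} (hg : ∀ x, 0 ≤ g x) (hgf : ∀ x, g x ≤ f ‖x‖)
    (hf : AEStronglyMeasurable f (volume.restrict (Set.Ioi 0))) (hq : IntegrableOn q (Set.Ioi 0))
    (hfq : ∀ y ∈ Set.Ioi 0, y ^ (Module.finrank ℝ E - 1) * f y ≤ q y) :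
    ∫ x, g x ∂μ ≤
      Module.finrank ℝ E * μ.real (Metric.ball 0 1) * ∫ y in Set.Ioi 0, q y := by
  have hf0 (y : ℝ) (hy : y ∈ Set.Ioi 0) : 0 ≤ y ^ (Module.finrank ℝ E - 1) * f y := by
    obtain ⟨x, rfl⟩ := exists_norm_eq E (le_of_lt hy)
    exact mul_nonneg (by positivity) ((hg x).trans (hgf x))
  have hradial : IntegrableOn (fun y => y ^ (Module.finrank ℝ E - 1) * f y) (Set.Ioi 0) := by
    have hpow : Continuous fun y : ℝ => y ^ (Module.finrank ℝ E - 1) := by fun_prop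
    refine Integrable.mono' hq (hpow.aestronglyMeasurable.mul hf)
      (ae_restrict_of_forall_mem measurableSet_Ioi fun y hy => ?_)
    rw [Real.norm_of_nonneg (hf0 y hy)]
    exact hfq y hy
  calc ∫ x, g x ∂μ ≤ ∫ x, f ‖x‖ ∂μ :=
        integral_mono_of_nonneg (ae_of_all _ hg) ((integrable_fun_norm_addHaar μ).2 hradial)
          (ae_of_all _ hgf)
    _ = Module.finrank ℝ E * μ.real (Metric.ball 0 1) *
          ∫ y in Set.Ioi 0, y ^ (Module.finrank ℝ E - 1) * f y := by
        simp only [integral_fun_norm_addHaar, nsmul_eq_mul, smul_eq_mul, mul_assoc]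
    _ ≤ Module.finrank ℝ E * μ.real (Metric.ball 0 1) * ∫ y in Set.Ioi 0, q y :=
        mul_le_mul_of_nonneg_left (setIntegral_mono_on hradial hq measurableSet_Ioi hfq)
          (by positivity)

end PolarCoordinates

section SpectralEstimate

variable {α : ℝ} {d : ℕ} {k : Fin d → ℕ}

theorem abs_dotProduct_le (h ξ : Fin d → ℝ) : |h ⬝ᵥ ξ| ≤ d * (nrm h * ‖ξ‖) :=
  calc |h ⬝ᵥ ξ| ≤ ∑ j, |h j * ξ j| := Finset.abs_sum_le_sum_abs _ _
    _ ≤ ∑ _j : Fin d, nrm h * ‖ξ‖ := by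
        refine Finset.sum_le_sum fun j _ => ?_
        rw [abs_mul]
        exact mul_le_mul (abs_apply_le_nrm h j) (norm_le_pi_norm ξ j) (abs_nonneg _)
          (Real.sqrt_nonneg _)
    _ = d * (nrm h * ‖ξ‖) := by rw [Finset.sum_const, Finset.card_fin, nsmul_eq_mul]

theorem norm_phase_sub_sq_le (x h ξ : Fin d → ℝ) :
    ‖phase x ξ - phase (x + h) ξ‖ ^ 2 ≤ min 4 ((d : ℝ) ^ 2 * (nrm h * ‖ξ‖) ^ 2) := by
  have htwo : ‖phase x ξ - phase (x + h) ξ‖ ≤ 2 := by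
    refine (norm_sub_le _ _).trans ?_
    rw [norm_phase, norm_phase, one_add_one_eq_two]
  have hlip : ‖phase x ξ - phase (x + h) ξ‖ ≤ d * (nrm h * ‖ξ‖) := by
    rw [phase_add, ← mul_one_sub, norm_mul, norm_phase, one_mul, norm_sub_rev]
    exact Real.norm_exp_I_mul_ofReal_sub_one_le.trans (abs_dotProduct_le h ξ)
  refine le_min ((pow_le_pow_left₀ (norm_nonneg _) htwo 2).trans_eq (by norm_num)) ?_
  rw [← mul_pow]
  exact pow_le_pow_left₀ (norm_nonneg _) hlip 2

theorem pow_mul_one_add_sq_rpow_le {y : ℝ} (hy : 0 ≤ y) (m : ℕ) (s : ℝ) :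
    y ^ m * (1 + y ^ 2) ^ s ≤ (1 + y ^ 2) ^ ((m : ℝ) / 2 + s) := by
  have hpow : y ^ m ≤ (1 + y ^ 2) ^ ((m : ℝ) / 2) :=
    calc y ^ m = (y ^ 2) ^ ((m : ℝ) / 2) := by
          rw [← Real.rpow_natCast_mul hy, ← Real.rpow_natCast]
          push_cast
          ring_nf
      _ ≤ (1 + y ^ 2) ^ ((m : ℝ) / 2) := by
          gcongr
          exact le_add_of_nonneg_left zero_le_one
  rw [Real.rpow_add (by positivity)]
  gcongr

/-- A radial majorant, at frequency radius `y`, of the Matérn spectral density times the squared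
modulus of the multiplier of an increment over distance `t` of a derivative of order `m`; the factor
`c` absorbs the dimension. -/
def spectralProfile (α : ℝ) (d m : ℕ) (c t y : ℝ) : ℝ :=
  (1 + y ^ 2) ^ (-(α + (d : ℝ) / 2)) * ((y ^ m) ^ 2 * min 4 (c * (t * y) ^ 2))

theorem continuous_spectralProfile (α : ℝ) (d m : ℕ) (c t : ℝ) :
    Continuous (spectralProfile α d m c t) := by
  refine Continuous.mul (Continuous.rpow_const (by fun_prop) fun y => Or.inl ?_) (by fun_prop)
  positivity

theorem maternDensity_mul_symbol_phase_sub_le (hα : 0 ≤ α) (k : Fin d → ℕ) (x h ξ : Fin d → ℝ) :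
    maternDensity α d ξ * (‖symbol k ξ‖ * ‖phase x ξ - phase (x + h) ξ‖) ^ 2 ≤
      spectralProfile α d (∑ j, k j) ((d : ℝ) ^ 2) (nrm h) ‖ξ‖ := by
  rw [mul_pow]
  refine mul_le_mul (maternDensity_le hα ξ) (mul_le_mul ?_ (norm_phase_sub_sq_le x h ξ)
    (sq_nonneg _) (by positivity)) (by positivity) (by positivity)
  exact pow_le_pow_left₀ (norm_nonneg _) (norm_symbol_le k ξ) 2

theorem pow_mul_spectralProfile_le (hd : 1 ≤ d) {c y : ℝ} (hc : 0 ≤ c) (hy : 0 ≤ y) (α : ℝ)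
    (m : ℕ) (t : ℝ) :
    y ^ (d - 1) * spectralProfile α d m c t y ≤ radialBound (α - m) c t y := by
  have hexp : ((d - 1 + m * 2 : ℕ) : ℝ) / 2 + -(α + (d : ℝ) / 2) = -(α - m + 1 / 2) := by
    push_cast [Nat.cast_sub hd]
    ring
  calc y ^ (d - 1) * spectralProfile α d m c t y
      = min 4 (c * (t * y) ^ 2) *
          (y ^ (d - 1 + m * 2) * (1 + y ^ 2) ^ (-(α + (d : ℝ) / 2))) := by
        rw [spectralProfile, pow_add, pow_mul]
        ring
    _ ≤ radialBound (α - m) c t y := by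
        rw [radialBound, ← hexp]
        gcongr
        exact pow_mul_one_add_sq_rpow_le hy _ _

theorem integral_symbol_phase_sub_le (hd : 1 ≤ d) (hk : ((∑ j, k j : ℕ) : ℝ) < α)
    (x h : Fin d → ℝ) :
    ∫ ξ, (‖symbol k ξ‖ * ‖phase x ξ - phase (x + h) ξ‖) ^ 2 ∂maternMeasure α d ≤
      d * volume.real (Metric.ball (0 : Fin d → ℝ) 1) *
        ∫ y in Set.Ioi 0, radialBound (α - (∑ j, k j : ℕ)) ((d : ℝ) ^ 2) (nrm h) y := by
  have hα : 0 ≤ α := (Nat.cast_nonneg _).trans hk.le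
  have : Nonempty (Fin d) := ⟨⟨0, hd⟩⟩
  have hpolar := integral_le_of_le_fun_norm volume
    (fun ξ => mul_nonneg (maternDensity_nonneg α d ξ) (sq_nonneg _))
    (maternDensity_mul_symbol_phase_sub_le hα k x h)
    (continuous_spectralProfile _ _ _ _ _).aestronglyMeasurable
    (integrableOn_radialBound (sub_pos.2 hk) (sq_nonneg (d : ℝ)) (nrm h)) fun y hy => by
      rw [Module.finrank_fin_fun]
      exact pow_mul_spectralProfile_le hd (sq_nonneg _) (le_of_lt hy) α _ _
  rwa [Module.finrank_fin_fun, ← integral_maternMeasure] at hpolar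

theorem abs_secondDifference_mder2_condK_le_rate (hd : 1 ≤ d) (hk : ((∑ j, k j : ℕ) : ℝ) < α)
    {n : ℕ} {w : Fin n → Fin d → ℝ} (hw : IsUnit (maternMat α d w).det) (x : Fin d → ℝ)
    {h : Fin d → ℝ} (h0 : 0 < nrm h) (h2 : nrm h ≤ 1 / 2) :
    |secondDifference (mder2 d k k (condK α d w)) x (x + h)| ≤
      d * volume.real (Metric.ball (0 : Fin d → ℝ) 1) *
        (((d : ℝ) ^ 2 * (3 + |2 - 2 * (α - (∑ j, k j : ℕ))|⁻¹) + 4 / (α - (∑ j, k j : ℕ))) *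
          secondDifferenceRate (α - (∑ j, k j : ℕ)) (nrm h)) := by
  have hμ := memLp_one_add_pow_maternMeasure (d := d) hk
  have hzero : ∑ j, (0 : Fin d → ℕ) j ≤ ∑ j, k j := Finset.sum_le_sum fun j _ => Nat.zero_le _
  have hkernel (y z : Fin d → ℝ) : matern α d (y - z) =
      inner ℝ (fourierFeature hμ hzero y) (fourierFeature hμ hzero z) := by
    rw [inner_fourierFeature_zero, matern_eq_integral_maternMeasure]
  calc |secondDifference (mder2 d k k (condK α d w)) x (x + h)|
      ≤ ‖fourierFeature hμ le_rfl x - fourierFeature hμ le_rfl (x + h)‖ ^ 2 :=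
        abs_secondDifference_mder2_condK_le hkernel
          (mder_inner_fourierFeature hμ hzero le_rfl) hw x (x + h)
    _ ≤ d * volume.real (Metric.ball (0 : Fin d → ℝ) 1) *
          ∫ y in Set.Ioi 0, radialBound (α - (∑ j, k j : ℕ)) ((d : ℝ) ^ 2) (nrm h) y := by
        rw [norm_fourierFeature_sub_sq]
        exact integral_symbol_phase_sub_le hd hk x h
    _ ≤ _ := by
        gcongr
        exact integral_radialBound_le_rate (sub_pos.2 hk) (sq_nonneg _) h0 h2

end SpectralEstimate

section LargestIntegerBelow

variable {α : ℝ}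

theorem lbelow_add_one (hα : 0 < α) : (lbelow α : ℝ) + 1 = ⌈α⌉₊ := by
  rw [lbelow, Nat.cast_sub (Nat.one_le_ceil_iff.2 hα), Nat.cast_one, sub_add_cancel]

theorem lbelow_lt (hα : 0 < α) : (lbelow α : ℝ) < α := by
  linarith [lbelow_add_one hα, Nat.ceil_lt_add_one hα.le]

theorem sub_lbelow_lt_one (hα : 0 < α) (h : ¬ IsNatVal α) : α - lbelow α < 1 := by
  have hlt : α < ⌈α⌉₊ := (Nat.le_ceil α).lt_of_ne fun heq => h ⟨_, heq⟩
  linarith [lbelow_add_one hα]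

theorem sub_lbelow_eq_one (hα : 0 < α) (h : IsNatVal α) : α - lbelow α = 1 := by
  obtain ⟨n, rfl⟩ := h
  have hceil := lbelow_add_one hα
  rw [Nat.ceil_natCast] at hceil
  exact sub_eq_of_eq_add' hceil.symm

end LargestIntegerBelow

theorem stmt10_general (α : ℝ) (d : ℕ) (hd : 1 ≤ d) (m : ℕ) (hm : (m : ℝ) < α) :
    ∃ C : ℝ, 0 < C ∧ ∃ δ : ℝ, 0 < δ ∧ δ < 1 ∧
      ∀ (n : ℕ) (w : Fin n → Fin d → ℝ), IsUnit (maternMat α d w).det →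
        ∀ k : Fin d → ℕ, (∑ j, k j) = m →
          ∀ x h : Fin d → ℝ, 0 < nrm h → nrm h ≤ δ →
            |secondDifference (mder2 d k k (condK α d w)) x (x + h)| ≤
              C * secondDifferenceRate (α - m) (nrm h) := by
  have hball : 0 < volume.real (Metric.ball (0 : Fin d → ℝ) 1) :=
    ENNReal.toReal_pos (Metric.measure_ball_pos _ _ one_pos).ne' measure_ball_lt_top.ne
  have hβ : 0 < α - m := sub_pos.2 hm
  refine ⟨d * volume.real (Metric.ball (0 : Fin d → ℝ) 1) *
    ((d : ℝ) ^ 2 * (3 + |2 - 2 * (α - m)|⁻¹) + 4 / (α - m)), by positivity, 1 / 2, by norm_num,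
    by norm_num, fun n w hw k hk x h h0 h2 => ?_⟩
  subst hk
  rw [mul_assoc]
  exact abs_secondDifference_mder2_condK_le_rate hd hm hw x h0 h2

/-- Lemma `matern cond smooth`, second-difference part: with constants `C`
and `δ` depending only on `α` and `d` (independent of the conditioning set `A`), for all
multi-indices `k` with `|k| = ⌊α⌋⁻` and all small `h ≠ 0`, the second difference of
`K̃^{(k,k)}` is bounded by `C ‖h‖₂^{2(α−⌊α⌋⁻)}` if `α ∉ ℕ` and `C ‖h‖₂² ln(1/‖h‖₂)` if
`α ∈ ℕ`. -/
theorem stmt10 (α : ℝ) (hα : 0 < α) (d : ℕ) (hd : 1 ≤ d) :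
    ∃ C : ℝ, 0 < C ∧ ∃ δ : ℝ, 0 < δ ∧ δ < 1 ∧
      ∀ (n : ℕ) (w : Fin n → Fin d → ℝ), Function.Injective w →
        IsUnit (maternMat α d w).det →
        ∀ k : Fin d → ℕ, (∑ j, k j) = lbelow α →
          ∀ x h : Fin d → ℝ, 0 < nrm h → nrm h ≤ δ →
            (¬ IsNatVal α →
              |mder2 d k k (condK α d w) x x - mder2 d k k (condK α d w) x (x + h) -
                  mder2 d k k (condK α d w) (x + h) x +
                  mder2 d k k (condK α d w) (x + h) (x + h)| ≤
                C * nrm h ^ (2 * (α - (lbelow α : ℝ)))) ∧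
            (IsNatVal α →
              |mder2 d k k (condK α d w) x x - mder2 d k k (condK α d w) x (x + h) -
                  mder2 d k k (condK α d w) (x + h) x +
                  mder2 d k k (condK α d w) (x + h) (x + h)| ≤
                C * (nrm h ^ (2 : ℕ) * Real.log (1 / nrm h))) := by
  obtain ⟨C, hC, δ, hδ, hδ1, hbound⟩ := stmt10_general α d hd (lbelow α) (lbelow_lt hα)
  refine ⟨C, hC, δ, hδ, hδ1, fun n w _ hw k hk x h h0 hle => ⟨fun hα' => ?_, fun hα' => ?_⟩⟩
  · simpa only [secondDifference, secondDifferenceRate, if_pos (sub_lbelow_lt_one hα hα')] using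
      hbound n w hw k hk x h h0 hle
  · simpa only [secondDifference, secondDifferenceRate, sub_lbelow_eq_one hα hα', lt_irrefl,
      if_true, if_false] using hbound n w hw k hk x h h0 hle
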